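/- For all k, ℓ ∈ ℕ, β_{3k} > β_{3ℓ} if and only if k ⊳ ℓ in the Sharkovskii ordering. -/

import Mathlib

open Filter Set

noncomputable section

namespace FatSierpinski

/-- The digit set Ω = {(0,0),(1,0),(0,1)} ⊆ ℝ². -/
def OmegaR : Set (ℝ × ℝ) := {(0, 0), (1, 0), (0, 1)}

/-- The fat Sierpinski gasket `S_β` (sequences are 0-indexed: `d i` is the digit d_{i+1}). -/
def Sfat (β : ℝ) : Set (ℝ × ℝ) :=
  {x | ∃ d : ℕ → ℝ × ℝ, (∀ i, d i ∈ OmegaR) ∧ x = ∑' i : ℕ, (β ^ (i + 1))⁻¹ • d i}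

/-- The convex hull `Δ_β` of `S_β`. -/
def Delta (β : ℝ) : Set (ℝ × ℝ) := convexHull ℝ (Sfat β)

/-- The map `f_d(x) = (x + d)/β`. -/
def fmap (β : ℝ) (d : ℝ × ℝ) (x : ℝ × ℝ) : ℝ × ℝ := β⁻¹ • (x + d)

/-- The overlap region `O_β = ⋃_{c ≠ d ∈ Ω} f_c(Δ_β) ∩ f_d(Δ_β)`. -/
def Ofat (β : ℝ) : Set (ℝ × ℝ) :=
  ⋃ c ∈ OmegaR, ⋃ d ∈ OmegaR, ⋃ (_ : c ≠ d), (fmap β c '' Delta β) ∩ (fmap β d '' Delta β)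

/-- The univoque set of codings `𝐔_β`. -/
def Ufat (β : ℝ) : Set (ℕ → ℝ × ℝ) :=
  {d | (∀ i, d i ∈ OmegaR) ∧
    ∀ n : ℕ, (∑' i : ℕ, (β ^ (i + 1))⁻¹ • d (n + i)) ∉ Ofat β}

/-- `d` has smallest period `k`. -/
def SmallestPeriod {α : Type*} (d : ℕ → α) (k : ℕ) : Prop :=
  0 < k ∧ (∀ i, d (i + k) = d i) ∧ ∀ j, 0 < j → j < k → ∃ i, d (i + j) ≠ d i

/-- The critical base `β_k`. -/
def betaK (k : ℕ) : ℝ :=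
  sInf {β : ℝ | β ∈ Set.Ioc (1 : ℝ) 2 ∧ ∃ d ∈ Ufat β, SmallestPeriod d k}

/-- Strict lexicographic order on sequences. -/
def seqLT {α : Type*} [Preorder α] (a b : ℕ → α) : Prop :=
  ∃ n, (∀ i < n, a i = b i) ∧ a n < b n

/-- Weak lexicographic order on sequences. -/
def seqLE {α : Type*} [Preorder α] (a b : ℕ → α) : Prop :=
  seqLT a b ∨ a = b

/-- `a` is a 0-1 sequence. -/
def IsBinary (a : ℕ → ℕ) : Prop := ∀ i, a i ≤ 1

/-- `a` does not end with `0^∞`. -/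
def NotEndInZeros (a : ℕ → ℕ) : Prop := ∀ N, ∃ i, N ≤ i ∧ a i ≠ 0

/-- `∑_{i=1}^∞ a_i β^{-i} = 1` (0-indexed: `a i` is a_{i+1}). -/
def SumsToOne (β : ℝ) (a : ℕ → ℕ) : Prop :=
  ∑' i : ℕ, (a i : ℝ) / β ^ (i + 1) = 1

/-- `a` is the quasi-greedy β-expansion of 1: the lexicographically largest
binary sequence not ending in `0^∞` whose value in base β is 1. -/
def IsQuasiGreedy (β : ℝ) (a : ℕ → ℕ) : Prop :=
  IsBinary a ∧ NotEndInZeros a ∧ SumsToOne β a ∧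
    ∀ b : ℕ → ℕ, IsBinary b → NotEndInZeros b → SumsToOne β b → seqLE b a

/-- `w⁺`: replace the final digit 0 of a block by 1. -/
def plusBlock (w : List ℕ) : List ℕ := w.dropLast ++ [1]

/-- `Θ` flips the outer digits of every consecutive triple
(000↦101, 001↦100, 100↦001, 101↦000). -/
def thetaBlock (w : List ℕ) : List ℕ :=
  w.mapIdx fun i x => if i % 3 = 1 then x else 1 - x

/-- `tB n` is the block `t_{n+1}`: `t_1 = 100`, `t_{n+1} = t_n⁺ Θ(t_n⁺)`. -/
def tB : ℕ → List ℕ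
  | 0 => [1, 0, 0]
  | n + 1 => plusBlock (tB n) ++ thetaBlock (plusBlock (tB n))

/-- The sequence `u w^∞` (the block `u` followed by `w` repeated forever). -/
def prefixPeriodic (u w : List ℕ) : ℕ → ℕ := fun i =>
  if i < u.length then u.getD i 0 else w.getD ((i - u.length) % w.length) 0

/-- The periodic sequence `w^∞`. -/
def periodicSeq (w : List ℕ) : ℕ → ℕ := fun i => w.getD (i % w.length) 0

/-- The componentwise limit `λ = 101001000101…` of the blocks `t_n`
(the digit `λ_{i+1}` has stabilized in `t_{i+2} = tB (i+1)`). -/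
def lamSeq : ℕ → ℕ := fun i => (tB (i + 1)).getD i 0

/-- `β_c` is the unique base in (1,2] with `∑ λ_i β^{-i} = 1`. -/
def IsBetaC (β : ℝ) : Prop := β ∈ Set.Ioc (1 : ℝ) 2 ∧ SumsToOne β lamSeq

/-- The sequence `t_{n+2}⁺ (Θ(t_{n+2}))^∞`, the quasi-greedy expansion of 1 for `β̂_n`. -/
def hatSeq (n : ℕ) : ℕ → ℕ :=
  prefixPeriodic (plusBlock (tB (n + 1))) (thetaBlock (tB (n + 1)))

/-- The Sharkovskii ordering `k ⊳ ℓ` on positive integers. -/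
def Sharkovskii (k l : ℕ) : Prop :=
  ∃ a b c d : ℕ, k = 2 ^ a * (2 * b + 1) ∧ l = 2 ^ c * (2 * d + 1) ∧ k ≠ l ∧
    ((1 ≤ b ∧ d = 0) ∨ (1 ≤ b ∧ 1 ≤ d ∧ (a < c ∨ (a = c ∧ b < d))) ∨
      (b = 0 ∧ d = 0 ∧ c < a))

/-- The digit set Ω as pairs of naturals (for combinatorial statements). -/
def OmegaD : Set (ℕ × ℕ) := {(0, 0), (1, 0), (0, 1)}

/-- The periodic extension `(d_1 … d_k)^∞` of a block. -/
def cyc (d : List (ℕ × ℕ)) : ℕ → ℕ × ℕ := fun i => d.getD (i % d.length) (0, 0)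

/-- Strict lexicographic order on lists. -/
def listLT (u v : List ℕ) : Prop := List.Lex (· < ·) u v

/-- Weak lexicographic order on lists. -/
def listLE (u v : List ℕ) : Prop := listLT u v ∨ u = v

/-- The first components `d_1¹ … d_k¹` of a block over Ω. -/
def comp1 (d : List (ℕ × ℕ)) : List ℕ := d.map Prod.fst

/-- The second components `d_1² … d_k²` of a block over Ω. -/
def comp2 (d : List (ℕ × ℕ)) : List ℕ := d.map Prod.snd

/-- The digits `(1 - d_1⁺) … (1 - d_k⁺)` where `d⁺ = d¹ + d²`. -/
def comp3 (d : List (ℕ × ℕ)) : List ℕ := d.map fun x => 1 - x.1 - x.2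

/-- Cyclic shift of a list by `j`. -/
def rot {α : Type*} (j : ℕ) (l : List α) : List α := l.drop j ++ l.take j

/-- `d` is a representation of the binary block `a`. -/
def IsRepresentation (a : List ℕ) (d : List (ℕ × ℕ)) : Prop :=
  d.length = a.length ∧ (∀ x ∈ d, x ∈ OmegaD) ∧
  SmallestPeriod (cyc d) a.length ∧
  comp1 d = a ∧ listLE (comp3 d) (comp2 d) ∧ listLE (comp2 d) a ∧
  ∀ j < a.length,
    listLE (comp1 (rot j d)) a ∧ listLE (comp2 (rot j d)) a ∧ listLE (comp3 (rot j d)) a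

/-- A binary block is admissible if it has a representation. -/
def IsAdmissible (a : List ℕ) : Prop := ∃ d, IsRepresentation a d

/-- The `i`-th consecutive triple of a block (0-indexed). -/
def tripleAt (a : List ℕ) (i : ℕ) : List ℕ :=
  [a.getD (3 * i) 0, a.getD (3 * i + 1) 0, a.getD (3 * i + 2) 0]

/-- The edges of the directed graph on {000, 001, 100, 101} defining the subshift `X`. -/
def XEdge (u v : List ℕ) : Prop :=
  (u, v) ∈ ({([1,0,1], [0,0,1]), ([1,0,1], [0,0,0]), ([0,0,1], [0,0,0]),
             ([0,0,0], [1,0,1]), ([0,0,0], [1,0,0]), ([1,0,0], [1,0,1])} :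
      Set (List ℕ × List ℕ))

/-! For each letter `j`, a coding over the three letters of `Ω` has a binary sequence marking the
occurrences of `j`. In barycentric coordinates, a coding belongs to `𝐔_β` if and only if, for every
letter, each tail that follows a non-occurrence has value less than `1` in base `β`. Parry's
comparison of lexicographic order and values then reduces `β_{3m}` to a combinatorial quantity: the
lexicographically least bound on these tails that a coding of smallest period `3m` can satisfy has
value `1` in base `β_{3m}`.

Such a small bound forces one letter to occupy exactly every third place, so the coding amounts to
a binary sequence of smallest period `m`: the order of the other two letters between consecutive
occurrences. The bounds become bounds on its tails, complemented after each `1`, as for itineraries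
of a unimodal map. If all these tails are below `1(10)^∞`, the sequence is eventually a period
doubling, so `m` is even and the bound can be renormalized; for odd `m > 1` the least bound
repeats the first `m` digits of `1(10)^∞`. These bounds are in Sharkovskii order. -/

section Periods

variable {α γ : Type*} {y : ℕ → α} {k : ℕ}

/-- The sequence `y` with its first `p` terms removed. -/
def shift (p : ℕ) (y : ℕ → α) : ℕ → α := fun i => y (p + i)

lemma shift_shift (p q : ℕ) (y : ℕ → α) : shift p (shift q y) = shift (q + p) y :=
  funext fun _ => congrArg y (Nat.add_assoc _ _ _).symm

lemma smallestPeriod_iff_isLeast :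
    SmallestPeriod y k ↔ IsLeast {j | 0 < j ∧ Function.Periodic y j} k := by
  refine ⟨fun ⟨hk, hper, hmin⟩ => ⟨⟨hk, hper⟩, fun j ⟨hj, hjper⟩ => ?_⟩,
    fun ⟨⟨hk, hper⟩, hmin⟩ => ⟨hk, hper, fun j hj hjk => ?_⟩⟩
  · by_contra! hjk
    obtain ⟨i, hi⟩ := hmin j hj hjk
    exact hi (hjper i)
  · by_contra! hjper
    exact hjk.not_ge (hmin ⟨hj, hjper⟩)

lemma SmallestPeriod.periodic (h : SmallestPeriod y k) : Function.Periodic y k := h.2.1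

lemma SmallestPeriod.exists_ne_succ (h : SmallestPeriod y k) (hk : 2 ≤ k) :
    ∃ i, y (i + 1) ≠ y i :=
  h.2.2 1 one_pos hk

lemma periodic_shift_iff (hk : 0 < k) (hper : Function.Periodic y k) (p j : ℕ) :
    Function.Periodic (shift p y) j ↔ Function.Periodic y j := by
  refine ⟨fun h i => ?_, fun h i => ?_⟩
  · have hle : p ≤ p * k := Nat.le_mul_of_pos_right p hk
    have hshift : ∀ i, y (i + p * k) = y i := hper.nat_mul p
    calc y (i + j) = y (p + (i + (p * k - p) + j)) := by
          rw [← hshift]; congr 1; omega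
      _ = y (p + (i + (p * k - p))) := h _
      _ = y i := by rw [← hshift i]; congr 1; omega
  · exact (congrArg y (Nat.add_assoc p i j).symm).trans (h _)

lemma SmallestPeriod.shift (h : SmallestPeriod y k) (p : ℕ) : SmallestPeriod (shift p y) k := by
  simpa only [smallestPeriod_iff_isLeast, periodic_shift_iff h.1 h.periodic] using h

lemma smallestPeriod_mul_iff {x : ℕ → γ} {q m : ℕ} (hq : 0 < q)
    (hper : ∀ j, Function.Periodic x (q * j) ↔ Function.Periodic y j)
    (hdvd : ∀ j, Function.Periodic x j → q ∣ j) :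
    SmallestPeriod x (q * m) ↔ SmallestPeriod y m := by
  simp only [smallestPeriod_iff_isLeast]
  refine ⟨fun ⟨⟨hm, hx⟩, hmin⟩ => ⟨⟨Nat.pos_of_mul_pos_left hm, (hper m).1 hx⟩, ?_⟩,
    fun ⟨⟨hm, hy⟩, hmin⟩ => ⟨⟨Nat.mul_pos hq hm, (hper m).2 hy⟩, ?_⟩⟩
  · rintro j ⟨hj, hjper⟩
    exact Nat.le_of_mul_le_mul_left (hmin ⟨Nat.mul_pos hq hj, (hper j).2 hjper⟩) hq
  · rintro j ⟨hj, hjper⟩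
    obtain ⟨c, rfl⟩ := hdvd j hjper
    exact Nat.mul_le_mul_left q (hmin ⟨Nat.pos_of_mul_pos_left hj, (hper c).1 hjper⟩)

lemma SmallestPeriod.exists_run_start (h : SmallestPeriod y k) (hk : 2 ≤ k) {p : ℕ}
    (hp : y p = y (p + 1)) : ∃ n, y n ≠ y (n + 1) ∧ y (n + 1) = y (n + 2) := by
  by_contra! hrun
  have hback : ∀ m n, y (n + m) = y (n + m + 1) → y n = y (n + 1) := by
    intro m
    induction m with
    | zero => exact fun n hn => hn
    | succ m ih => exact fun n hn => ih n (by_contra fun hne => hrun (n + m) hne hn)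
  obtain ⟨i, hi⟩ := h.exists_ne_succ hk
  have hle : i ≤ i * k := Nat.le_mul_of_pos_right i h.1
  have hshift : ∀ j, y (j + i * k) = y j := h.periodic.nat_mul i
  refine hi (hback (p + (i * k - i)) i ?_).symm
  rw [show i + (p + (i * k - i)) + 1 = p + 1 + i * k by omega,
    show i + (p + (i * k - i)) = p + i * k by omega, hshift, hshift, hp]

lemma dvd_of_gaps {P Q : ℕ → Prop} {q : ℕ}
    (hgap : ∀ n, P n → ∃ t, 0 < t ∧ q ∣ t ∧ P (n + t) ∧ ∀ s, 0 < s → s < t → ¬ Q (n + s)) :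
    ∀ s n, P n → Q (n + s) → q ∣ s := by
  intro s
  induction s using Nat.strong_induction_on with
  | _ s ih =>
    intro n hP hQ
    rcases Nat.eq_zero_or_pos s with rfl | hs
    · exact dvd_zero q
    obtain ⟨t, ht, hqt, hPt, hbetween⟩ := hgap n hP
    have hts : t ≤ s := not_lt.1 fun hst => hbetween s hs hst hQ
    have hrest : q ∣ s - t := ih (s - t) (by omega) (n + t) hPt (by
      rwa [show n + t + (s - t) = n + s by omega])
    exact (Nat.dvd_sub_iff_left hts hqt).1 hrest

end Periods

section BinarySequences

/-- The tail of the binary sequence `y` after position `n`, complemented when `y n` is `true`: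
its first terms record where `y` differs from `y n`. -/
def reflectedTail (y : ℕ → Bool) (n : ℕ) : ℕ → Bool := fun i => xor (y n) (y (n + 1 + i))

/-- The period doubling substitution `w ↦ w₀ w̄₀ w₁ w̄₁ …`. -/
def double (w : ℕ → Bool) : ℕ → Bool := fun i => if i % 2 = 0 then w (i / 2) else !w (i / 2)

/-- The effect `v ↦ 1 v₀ v̄₀ v₁ v̄₁ …` of period doubling on reflected tails. -/
def renorm (v : ℕ → Bool) : ℕ → Bool
  | 0 => true
  | i + 1 => double v i

/-- The least upper bound on reflected tails that admits a binary sequence of smallest period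
`2 ^ a * (2 * b + 1)`. The limit value `renorm ⊤` is `1(10)^∞`. -/
def critSeq : ℕ → ℕ → ℕ → Bool
  | 0, 0 => ⊥
  | 0, b + 1 => fun i => renorm ⊤ (i % (2 * (b + 1) + 1))
  | a + 1, b => renorm (critSeq a b)

lemma double_two_mul (w : ℕ → Bool) (i : ℕ) : double w (2 * i) = w i := by
  simp [double]

lemma double_two_mul_add_one (w : ℕ → Bool) (i : ℕ) : double w (2 * i + 1) = !w i := by
  simp [double, Nat.mul_add_div]

lemma renorm_top (i : ℕ) : renorm ⊤ i = decide (i = 0 ∨ i % 2 = 1) := by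
  cases i with
  | zero => rfl
  | succ i =>
    rcases Nat.mod_two_eq_zero_or_one i with h | h <;>
      simp [renorm, double, h, Nat.add_mod]

lemma toLex_renorm_lt_renorm {v w : ℕ → Bool} (h : toLex v < toLex w) :
    toLex (renorm v) < toLex (renorm w) := by
  obtain ⟨n, hn, hlt⟩ := h
  refine ⟨2 * n + 1, fun i hi => ?_, ?_⟩
  · cases i with
    | zero => rfl
    | succ i =>
      have hi' : v (i / 2) = w (i / 2) := hn _ (by omega)
      simp only [Pi.toLex_apply, renorm, double, hi']
  · simpa only [Pi.toLex_apply, renorm, double_two_mul] using hlt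

lemma toLex_renorm_le_renorm {v w : ℕ → Bool} (h : toLex v ≤ toLex w) :
    toLex (renorm v) ≤ toLex (renorm w) :=
  StrictMono.monotone (f := fun v : Lex (ℕ → Bool) => toLex (renorm (ofLex v)))
    (fun _ _ => toLex_renorm_lt_renorm) h

lemma critSeq_zero_apply {b : ℕ} (hb : 1 ≤ b) (i : ℕ) :
    critSeq 0 b i = decide (i % (2 * b + 1) = 0 ∨ i % (2 * b + 1) % 2 = 1) := by
  obtain ⟨b, rfl⟩ := Nat.exists_eq_add_of_le' hb
  exact renorm_top _

lemma critSeq_head {a b : ℕ} (h : a ≠ 0 ∨ b ≠ 0) : critSeq a b 0 = true := by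
  cases a with
  | zero => simp [critSeq_zero_apply (b := b) (by omega)]
  | succ a => rfl

lemma critSeq_head_or_eq_bot (a b : ℕ) : critSeq a b 0 = true ∨ critSeq a b = ⊥ := by
  by_cases h : a ≠ 0 ∨ b ≠ 0
  · exact Or.inl (critSeq_head h)
  · obtain ⟨rfl, rfl⟩ : a = 0 ∧ b = 0 := by omega
    exact Or.inr rfl

lemma toLex_lt_critSeq_zero {b : ℕ} (hb : 1 ≤ b) {x : ℕ → Bool}
    (hx : ∀ i ≤ 2 * b + 2, x i = renorm ⊤ i) : toLex x < toLex (critSeq 0 b) := by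
  refine ⟨2 * b + 2, fun i hi => ?_, ?_⟩
  · rw [Pi.toLex_apply, Pi.toLex_apply, hx i hi.le, critSeq_zero_apply hb, renorm_top,
      decide_eq_decide]
    rcases Nat.lt_or_ge i (2 * b + 1) with h | h
    · rw [Nat.mod_eq_of_lt h]
    · obtain rfl : i = 2 * b + 1 := by omega
      simp [Nat.add_mod]
  · have hmod : (2 * b + 2) % (2 * b + 1) = 1 := by
      rw [show 2 * b + 2 = 1 + (2 * b + 1) by ring, Nat.add_mod_right, Nat.mod_eq_of_lt (by omega)]
    rw [Pi.toLex_apply, Pi.toLex_apply, hx _ le_rfl, critSeq_zero_apply hb, renorm_top, hmod]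
    simp

lemma toLex_critSeq_zero_lt {b d : ℕ} (hb : 1 ≤ b) (hbd : b < d) :
    toLex (critSeq 0 d) < toLex (critSeq 0 b) :=
  toLex_lt_critSeq_zero hb fun i hi => by
    rw [critSeq_zero_apply (by omega), renorm_top, Nat.mod_eq_of_lt (by omega)]

lemma toLex_critSeq_succ_le (a b : ℕ) : toLex (critSeq (a + 1) b) ≤ toLex (renorm ⊤) :=
  toLex_renorm_le_renorm le_top

lemma toLex_critSeq_succ_lt {a b c : ℕ} (hc : 1 ≤ c) :
    toLex (critSeq (a + 1) b) < toLex (critSeq 0 c) :=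
  (toLex_critSeq_succ_le a b).trans_lt (toLex_lt_critSeq_zero hc fun _ _ => rfl)

lemma toLex_critSeq_le (a b : ℕ) : toLex (critSeq a b) ≤ toLex (critSeq 0 1) := by
  rcases a with _ | a
  · rcases Nat.lt_trichotomy b 1 with h | rfl | h
    · obtain rfl : b = 0 := by omega
      exact bot_le
    · exact le_rfl
    · exact (toLex_critSeq_zero_lt le_rfl h).le
  · exact (toLex_critSeq_succ_lt le_rfl).le

lemma toLex_bot_lt_critSeq {a b : ℕ} (h : a ≠ 0 ∨ b ≠ 0) :
    toLex (critSeq 0 0) < toLex (critSeq a b) :=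
  ⟨0, by simp, by simp [critSeq_head h, critSeq]⟩

lemma toLex_critSeq_lt_critSeq {a b c d : ℕ}
    (h : (1 ≤ b ∧ d = 0) ∨ (1 ≤ b ∧ 1 ≤ d ∧ (a < c ∨ (a = c ∧ b < d))) ∨
      (b = 0 ∧ d = 0 ∧ c < a)) :
    toLex (critSeq c d) < toLex (critSeq a b) := by
  induction a generalizing c with
  | zero =>
    rcases c with _ | c
    · rcases Nat.eq_zero_or_pos d with rfl | hd
      · exact toLex_bot_lt_critSeq (by omega)
      · exact toLex_critSeq_zero_lt (by omega) (by omega)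
    · exact toLex_critSeq_succ_lt (by omega)
  | succ a ih =>
    rcases c with _ | c
    · obtain rfl : d = 0 := by omega
      exact toLex_bot_lt_critSeq (by omega)
    · exact toLex_renorm_lt_renorm (ih (by omega))

lemma reflectedTail_eq_true {y : ℕ → Bool} {n i : ℕ} :
    reflectedTail y n i = true ↔ y n ≠ y (n + 1 + i) :=
  Bool.xor_iff_ne

lemma reflectedTail_eq_false {y : ℕ → Bool} {n i : ℕ} :
    reflectedTail y n i = false ↔ y n = y (n + 1 + i) := by
  rw [← Bool.not_eq_true, reflectedTail_eq_true, not_not]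

lemma reflectedTail_shift (y : ℕ → Bool) (p n : ℕ) :
    reflectedTail (shift p y) n = reflectedTail y (p + n) := by
  funext i
  simp only [reflectedTail, shift, Nat.add_assoc]

lemma reflectedTail_double_two_mul (w : ℕ → Bool) (n : ℕ) :
    reflectedTail (double w) (2 * n) = renorm (reflectedTail w n) := by
  funext i
  rcases i with _ | i
  · simp [reflectedTail, renorm, double_two_mul, double_two_mul_add_one]
  rcases Nat.even_or_odd' i with ⟨c, rfl | rfl⟩
  · rw [renorm, double_two_mul, reflectedTail, double_two_mul,
      show 2 * n + 1 + (2 * c + 1) = 2 * (n + 1 + c) by ring, double_two_mul, reflectedTail]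
  · rw [renorm, double_two_mul_add_one, reflectedTail, double_two_mul,
      show 2 * n + 1 + (2 * c + 1 + 1) = 2 * (n + 1 + c) + 1 by ring, double_two_mul_add_one,
      reflectedTail, Bool.xor_not]

lemma periodic_double_iff (w : ℕ → Bool) (j : ℕ) :
    Function.Periodic (double w) (2 * j) ↔ Function.Periodic w j := by
  refine ⟨fun h i => ?_, fun h i => ?_⟩
  · simpa only [← Nat.mul_add, double_two_mul] using h (2 * i)
  · simp only [double, show (i + 2 * j) % 2 = i % 2 by omega,
      show (i + 2 * j) / 2 = i / 2 + j by omega, h (i / 2)]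

lemma two_dvd_of_periodic_double {w : ℕ → Bool} {j : ℕ} (h : Function.Periodic (double w) j) :
    2 ∣ j := by
  by_contra hj
  obtain ⟨c, rfl⟩ : ∃ c, j = 2 * c + 1 := ⟨j / 2, by omega⟩
  have hflip : ∀ i, w (i + c) = !w i := fun i => by
    have := h (2 * i)
    rw [show 2 * i + (2 * c + 1) = 2 * (i + c) + 1 by ring, double_two_mul_add_one,
      double_two_mul] at this
    simp [← this]
  have hsucc : ∀ i, w (i + 1) = w i := fun i => by
    have := h (2 * i + 1)
    rw [show 2 * i + 1 + (2 * c + 1) = 2 * (i + 1 + c) by ring, double_two_mul,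
      double_two_mul_add_one, hflip] at this
    simpa using this
  have hconst : ∀ i, w i = w 0 := fun i => by
    induction i with
    | zero => rfl
    | succ i ih => rw [hsucc, ih]
  have := hflip 0
  rw [hconst (0 + c)] at this
  simp at this

lemma smallestPeriod_double_iff {w : ℕ → Bool} {m : ℕ} :
    SmallestPeriod (double w) (2 * m) ↔ SmallestPeriod w m :=
  smallestPeriod_mul_iff two_pos (periodic_double_iff w) fun _ => two_dvd_of_periodic_double

lemma exists_eq_double {y : ℕ → Bool} (h : ∀ i, y (2 * i) ≠ y (2 * i + 1)) :
    ∃ w, y = double w := by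
  refine ⟨fun i => y (2 * i), funext fun i => ?_⟩
  rcases Nat.even_or_odd' i with ⟨c, rfl | rfl⟩
  · rw [double_two_mul]
  · rw [double_two_mul_add_one, Bool.eq_not]
    exact (h c).symm

lemma exists_next_repetition {y : ℕ → Bool} {n : ℕ}
    (hlt : toLex (reflectedTail y n) < toLex (renorm ⊤))
    (hne : y n ≠ y (n + 1)) (heq : y (n + 1) = y (n + 2)) :
    ∃ t, 0 < t ∧ 2 ∣ t ∧ (y (n + t) ≠ y (n + t + 1) ∧ y (n + t + 1) = y (n + t + 2)) ∧
      ∀ s, 0 < s → s < t → y (n + s + 1) ≠ y (n + s + 2) := by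
  obtain ⟨m, hagree, hdiff⟩ := hlt
  simp only [Pi.toLex_apply, renorm_top, Bool.lt_iff, decide_eq_true_eq] at hagree hdiff
  obtain ⟨hm, hmodd⟩ := hdiff
  have hval : ∀ i < m, (y n ≠ y (n + 1 + i) ↔ i = 0 ∨ i % 2 = 1) := fun i hi => by
    rw [← reflectedTail_eq_true, hagree i hi, decide_eq_true_eq]
  rw [reflectedTail_eq_false] at hm
  have hm0 : m ≠ 0 := by
    rintro rfl
    exact hne hm
  have hm1 : m ≠ 1 := by
    rintro rfl
    exact hne (hm.trans heq.symm)
  obtain ⟨t, rfl⟩ : ∃ t, m = 2 * t + 3 := ⟨(m - 3) / 2, by omega⟩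
  have hrep : y n = y (n + 1 + (2 * t + 2)) :=
    not_not.1 (mt (hval (2 * t + 2) (by omega)).1 (by omega))
  refine ⟨2 * t + 2, by omega, by omega, ⟨?_, ?_⟩, fun s hs hst => ?_⟩
  · rw [show n + (2 * t + 2) + 1 = n + 1 + (2 * t + 2) by ring, ← hrep,
      show n + (2 * t + 2) = n + 1 + (2 * t + 1) by ring]
    exact ((hval (2 * t + 1) (by omega)).2 (by omega)).symm
  · rw [show n + (2 * t + 2) + 1 = n + 1 + (2 * t + 2) by ring, ← hrep, hm]
    ring_nf
  · have hfst := hval s (by omega)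
    have hsnd := hval (s + 1) (by omega)
    rw [show n + s + 1 = n + 1 + s by ring, show n + s + 2 = n + 1 + (s + 1) by ring]
    intro heq
    rw [heq, hsnd] at hfst
    omega

lemma SmallestPeriod.exists_shift_eq_double {y : ℕ → Bool} {k : ℕ} (hy : SmallestPeriod y k)
    (hk : 2 ≤ k) (hlt : ∀ n, toLex (reflectedTail y n) < toLex (renorm ⊤)) :
    ∃ p w, FatSierpinski.shift p y = double w := by
  suffices h : ∃ p, ∀ i, y (p + 2 * i) ≠ y (p + 2 * i + 1) from
    h.imp fun p hp => exists_eq_double hp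
  by_cases hrep : ∃ p, y p = y (p + 1)
  · obtain ⟨p, hp⟩ := hrep
    obtain ⟨n, hn⟩ := hy.exists_run_start hk hp
    have hgaps : ∀ s n, y n ≠ y (n + 1) ∧ y (n + 1) = y (n + 2) →
        y (n + s + 1) = y (n + s + 2) → 2 ∣ s :=
      dvd_of_gaps (Q := fun n => y (n + 1) = y (n + 2)) fun n hn =>
        exists_next_repetition (hlt n) hn.1 hn.2
    refine ⟨n + 2, fun i heq => ?_⟩
    have := hgaps (2 * i + 1) n hn (by
      rwa [show n + (2 * i + 1) + 1 = n + 2 + 2 * i by ring,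
        show n + (2 * i + 1) + 2 = n + 2 + 2 * i + 1 by ring])
    omega
  · exact ⟨0, fun i heq => hrep ⟨_, heq⟩⟩

lemma toLex_lt_of_lt_periodic {k : ℕ} {x v s : ℕ → Bool} (hk : 0 < k)
    (hx : Function.Periodic x k) (hv : Function.Periodic v k) (hvs : ∀ i < k, v i = s i)
    (h : toLex x < toLex v) : toLex x < toLex s := by
  obtain ⟨m, hagree, hdiff⟩ := h
  have hmk : m < k := by
    by_contra! hkm
    have hxv : x (m - k) = v (m - k) := hagree _ (by omega)
    rw [← hx, ← hv, Nat.sub_add_cancel hkm] at hxv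
    exact hdiff.ne hxv
  exact ⟨m, fun i hi => (hagree i hi).trans (hvs i (hi.trans hmk)), hdiff.trans_eq (hvs m hmk)⟩

lemma exists_critSeq_zero_le_reflectedTail {b : ℕ} {y : ℕ → Bool}
    (hy : SmallestPeriod y (2 * b + 1)) :
    ∃ n, toLex (critSeq 0 b) ≤ toLex (reflectedTail y n) := by
  rcases Nat.eq_zero_or_pos b with rfl | hb
  · exact ⟨0, bot_le⟩
  by_contra! hlt
  have hper : ∀ n, Function.Periodic (reflectedTail y n) (2 * b + 1) := fun n i => by
    simp only [reflectedTail, ← Nat.add_assoc _ i, hy.periodic _]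
  obtain ⟨p, w, hw⟩ := hy.exists_shift_eq_double (by omega) fun n =>
    toLex_lt_of_lt_periodic (by omega) (hper n) (fun i => by simp [critSeq_zero_apply hb])
      (fun i hi => by rw [critSeq_zero_apply hb, renorm_top, Nat.mod_eq_of_lt hi]) (hlt n)
  have := two_dvd_of_periodic_double (hw ▸ (hy.shift p).periodic)
  omega

theorem exists_critSeq_le_reflectedTail {a b : ℕ} {y : ℕ → Bool}
    (hy : SmallestPeriod y (2 ^ a * (2 * b + 1))) :
    ∃ n, toLex (critSeq a b) ≤ toLex (reflectedTail y n) := by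
  induction a generalizing y with
  | zero => exact exists_critSeq_zero_le_reflectedTail (by simpa using hy)
  | succ a ih =>
    by_contra! hlt
    rw [pow_succ', mul_assoc] at hy
    have hpos : 0 < 2 ^ a * (2 * b + 1) := by positivity
    obtain ⟨p, w, hw⟩ := hy.exists_shift_eq_double (by omega) fun n =>
      (hlt n).trans_le (toLex_critSeq_succ_le a b)
    obtain ⟨n, hn⟩ := ih (smallestPeriod_double_iff.1 (hw ▸ hy.shift p))
    refine (hlt (p + 2 * n)).not_ge ?_
    rw [← reflectedTail_shift, hw, reflectedTail_double_two_mul]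
    exact toLex_renorm_le_renorm hn

lemma critSeq_zero_eq_succ_iff {b : ℕ} (hb : 1 ≤ b) (j : ℕ) :
    critSeq 0 b j = critSeq 0 b (j + 1) ↔ (2 * b + 1) ∣ j := by
  have hlt : j % (2 * b + 1) < 2 * b + 1 := Nat.mod_lt _ (by omega)
  rw [critSeq_zero_apply hb, critSeq_zero_apply hb, decide_eq_decide, Nat.add_mod,
    Nat.mod_eq_of_lt (by omega : 1 < 2 * b + 1), Nat.dvd_iff_mod_eq_zero]
  rcases Nat.lt_or_ge (j % (2 * b + 1) + 1) (2 * b + 1) with h | h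
  · rw [Nat.mod_eq_of_lt h]
    omega
  · rw [show j % (2 * b + 1) + 1 = 2 * b + 1 by omega, Nat.mod_self]
    omega

lemma periodic_critSeq_zero {b : ℕ} (hb : 1 ≤ b) :
    Function.Periodic (critSeq 0 b) (2 * b + 1) := fun i => by
  simp only [critSeq_zero_apply hb, Nat.add_mod_right]

lemma smallestPeriod_critSeq_zero {b : ℕ} (hb : 1 ≤ b) :
    SmallestPeriod (critSeq 0 b) (2 * b + 1) := by
  rw [smallestPeriod_iff_isLeast]
  refine ⟨⟨by omega, periodic_critSeq_zero hb⟩, fun j ⟨hj, hper⟩ => Nat.le_of_dvd hj ?_⟩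
  rw [← critSeq_zero_eq_succ_iff hb, ← Nat.zero_add j, hper, Nat.add_right_comm, hper]
  exact (critSeq_zero_eq_succ_iff hb 0).2 (dvd_zero _)

lemma toLex_reflectedTail_lt {y v : ℕ → Bool} {n : ℕ} (hv0 : v 0 = true) (hv1 : v 1 = true)
    (hn : y n ≠ y (n + 1) → y (n + 1) ≠ y (n + 2)) :
    toLex (reflectedTail y n) < toLex v := by
  by_cases h : y n = y (n + 1)
  · refine ⟨0, by simp, ?_⟩
    rw [Pi.toLex_apply, Pi.toLex_apply, reflectedTail_eq_false.2 h, hv0]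
    exact Bool.false_lt_true
  · have h0 : reflectedTail y n 0 = true := reflectedTail_eq_true.2 h
    have h1 : reflectedTail y n 1 = false :=
      reflectedTail_eq_false.2 ((Bool.eq_not.2 h).trans (Bool.eq_not.2 (hn h).symm).symm)
    refine ⟨1, fun i hi => ?_, ?_⟩
    · obtain rfl : i = 0 := by omega
      exact h0.trans hv0.symm
    · rw [Pi.toLex_apply, Pi.toLex_apply, h1, hv1]
      exact Bool.false_lt_true

lemma toLex_reflectedTail_critSeq_zero_le {b : ℕ} (hb : 1 ≤ b) (n : ℕ) :
    toLex (reflectedTail (critSeq 0 b) n) ≤ toLex (critSeq 0 b) := by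
  have hv0 : critSeq 0 b 0 = true := critSeq_head (by omega)
  have hv1 : critSeq 0 b 1 = true := by
    rw [← (critSeq_zero_eq_succ_iff hb 0).2 (dvd_zero _), hv0]
  by_cases hn : critSeq 0 b n ≠ critSeq 0 b (n + 1) → critSeq 0 b (n + 1) ≠ critSeq 0 b (n + 2)
  · exact (toLex_reflectedTail_lt hv0 hv1 hn).le
  push Not at hn
  obtain ⟨c, hc⟩ := (critSeq_zero_eq_succ_iff hb (n + 1)).1 hn.2
  have htail : ∀ i, critSeq 0 b (n + 1 + i) = critSeq 0 b i := fun i => by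
    rw [hc, mul_comm, add_comm]
    exact (periodic_critSeq_zero hb).nat_mul c i
  have hfalse : critSeq 0 b n = false := by
    have := hn.1
    rw [show critSeq 0 b (n + 1) = true from (htail 0).trans hv0] at this
    simpa using this
  refine le_of_eq (congrArg toLex (funext fun i => ?_))
  rw [reflectedTail, hfalse, htail, Bool.false_xor]

lemma eq_head_of_reflectedTail_le_bot {w : ℕ → Bool}
    (h : ∀ n, toLex (reflectedTail w n) ≤ toLex ⊥) (i : ℕ) : w i = w 0 := by
  cases i with
  | zero => rfl
  | succ i =>
    have hbot : reflectedTail w 0 = ⊥ := toLex.injective (le_bot_iff.1 (h 0))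
    have hi := reflectedTail_eq_false.1 (congrFun hbot i)
    rwa [zero_add, add_comm, eq_comm] at hi

lemma reflectedTail_double_of_const {w : ℕ → Bool} (hw : ∀ i, w i = w 0) (c : ℕ) :
    reflectedTail (double w) (2 * c + 1) = renorm ⊥ := by
  funext i
  rcases i with _ | i
  · rw [reflectedTail, double_two_mul_add_one, show 2 * c + 1 + 1 + 0 = 2 * (c + 1) by ring,
      double_two_mul, hw c, hw (c + 1)]
    exact Bool.not_xor_self _
  rcases Nat.even_or_odd' i with ⟨e, rfl | rfl⟩
  · rw [reflectedTail, double_two_mul_add_one,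
      show 2 * c + 1 + 1 + (2 * e + 1) = 2 * (c + 1 + e) + 1 by ring, double_two_mul_add_one,
      hw c, hw (c + 1 + e), renorm, double_two_mul]
    exact Bool.xor_self _
  · rw [reflectedTail, double_two_mul_add_one,
      show 2 * c + 1 + 1 + (2 * e + 1 + 1) = 2 * (c + 2 + e) by ring, double_two_mul,
      hw c, hw (c + 2 + e), renorm, double_two_mul_add_one]
    exact Bool.not_xor_self _

lemma toLex_reflectedTail_double_le {v w : ℕ → Bool} (hv : v 0 = true ∨ v = ⊥)
    (h : ∀ n, toLex (reflectedTail w n) ≤ toLex v) (n : ℕ) :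
    toLex (reflectedTail (double w) n) ≤ toLex (renorm v) := by
  rcases Nat.even_or_odd' n with ⟨c, rfl | rfl⟩
  · rw [reflectedTail_double_two_mul]
    exact toLex_renorm_le_renorm (h c)
  rcases hv with hv | rfl
  · refine (toLex_reflectedTail_lt rfl hv fun _ => ?_).le
    rw [show 2 * c + 1 + 1 = 2 * (c + 1) by ring, show 2 * c + 1 + 2 = 2 * (c + 1) + 1 by ring,
      double_two_mul, double_two_mul_add_one]
    exact (Bool.not_ne_self _).symm
  · exact (congrArg toLex
      (reflectedTail_double_of_const (eq_head_of_reflectedTail_le_bot h) c)).le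

theorem exists_reflectedTail_le_critSeq (a b : ℕ) :
    ∃ y : ℕ → Bool, SmallestPeriod y (2 ^ a * (2 * b + 1)) ∧
      ∀ n, toLex (reflectedTail y n) ≤ toLex (critSeq a b) := by
  induction a with
  | zero =>
    rw [pow_zero, one_mul]
    rcases Nat.eq_zero_or_pos b with rfl | hb
    · refine ⟨⊥, ⟨by norm_num, fun _ => rfl, fun j hj hj' => by omega⟩, fun n => ?_⟩
      exact le_of_eq (congrArg toLex (funext fun _ => Bool.xor_self _))
    · exact ⟨critSeq 0 b, smallestPeriod_critSeq_zero hb, toLex_reflectedTail_critSeq_zero_le hb⟩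
  | succ a ih =>
    obtain ⟨w, hw, hle⟩ := ih
    refine ⟨double w, ?_, toLex_reflectedTail_double_le (critSeq_head_or_eq_bot a b) hle⟩
    rwa [pow_succ', mul_assoc, smallestPeriod_double_iff]

end BinarySequences

section ThreeLetters

/-- The indicator of the occurrences of the letter `j` in `d`. -/
def visits {α : Type*} [DecidableEq α] (d : ℕ → α) (j : α) : ℕ → Bool := fun i => decide (d i = j)

/-- Parry's lexicographic condition: each tail of `w` that follows a `false` is at most `v`. -/
def ParryLE (w v : ℕ → Bool) : Prop :=
  ∀ n, w n = false → toLex (shift (n + 1) w) ≤ toLex v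

/-- The effect `v ↦ 1 0 v₀ v̄₀ 0 v₁ v̄₁ …` of `encode` on reflected tails. -/
def spread (v : ℕ → Bool) : ℕ → Bool
  | 0 => true
  | i + 1 => if i % 3 = 0 then false else if i % 3 = 1 then v (i / 3) else !v (i / 3)

lemma spread_three_mul_add_one (v : ℕ → Bool) (n : ℕ) : spread v (3 * n + 1) = false := by
  simp [spread]

lemma spread_three_mul_add_two (v : ℕ → Bool) (n : ℕ) : spread v (3 * n + 2) = v n := by
  simp [spread, Nat.mul_add_div]

lemma spread_three_mul_add_three (v : ℕ → Bool) (n : ℕ) : spread v (3 * n + 3) = !v n := by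
  simp [spread, Nat.mul_add_div]

lemma toLex_spread_lt_spread {v w : ℕ → Bool} (h : toLex v < toLex w) :
    toLex (spread v) < toLex (spread w) := by
  obtain ⟨n, hn, hlt⟩ := h
  refine ⟨3 * n + 2, fun i hi => ?_, ?_⟩
  · rw [Pi.toLex_apply, Pi.toLex_apply]
    cases i with
    | zero => rfl
    | succ i =>
      simp only [spread]
      split_ifs with h0 h1
      · rfl
      · exact hn _ (by omega)
      · exact congrArg _ (hn _ (by omega))
  · simpa only [Pi.toLex_apply, spread_three_mul_add_two] using hlt

lemma toLex_spread_le_spread {v w : ℕ → Bool} (h : toLex v ≤ toLex w) :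
    toLex (spread v) ≤ toLex (spread w) :=
  StrictMono.monotone (f := fun v : Lex (ℕ → Bool) => toLex (spread (ofLex v)))
    (fun _ _ => toLex_spread_lt_spread) h

lemma spread_bot (i : ℕ) : spread ⊥ i = decide (3 ∣ i) := by
  cases i with
  | zero => rfl
  | succ i =>
    simp only [spread, Pi.bot_apply]
    split_ifs <;> simp <;> omega

section Encode

variable {α : Type*}

/-- The sequence over three letters in which `B` occupies every third place and the blocks between
consecutive `B`s read `A C` or `C A` according to the digits of `y`. -/
def encode (A B C : α) (y : ℕ → Bool) : ℕ → α := fun i =>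
  if i % 3 = 0 then B
  else if i % 3 = 1 then (if y (i / 3) then A else C)
  else (if y (i / 3) then C else A)

lemma encode_three_mul (A B C : α) (y : ℕ → Bool) (n : ℕ) : encode A B C y (3 * n) = B := by
  simp [encode]

lemma encode_three_mul_add_one (A B C : α) (y : ℕ → Bool) (n : ℕ) :
    encode A B C y (3 * n + 1) = if y n then A else C := by
  simp [encode, Nat.mul_add_div]

lemma encode_three_mul_add_two (A B C : α) (y : ℕ → Bool) (n : ℕ) :
    encode A B C y (3 * n + 2) = if y n then C else A := by
  simp [encode, Nat.mul_add_div]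

lemma periodic_encode_iff {A C : α} (B : α) (hAC : A ≠ C) (y : ℕ → Bool) (j : ℕ) :
    Function.Periodic (encode A B C y) (3 * j) ↔ Function.Periodic y j := by
  refine ⟨fun h i => ?_, fun h i => ?_⟩
  · have := h (3 * i + 1)
    rw [show 3 * i + 1 + 3 * j = 3 * (i + j) + 1 by ring, encode_three_mul_add_one,
      encode_three_mul_add_one] at this
    cases hi : y i <;> cases hij : y (i + j) <;> simp_all
  · simp only [encode, show (i + 3 * j) % 3 = i % 3 by omega,
      show (i + 3 * j) / 3 = i / 3 + j by omega, h (i / 3)]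

lemma encode_eq_middle_iff {A B C : α} (hA : A ≠ B) (hC : C ≠ B) (y : ℕ → Bool) (i : ℕ) :
    encode A B C y i = B ↔ 3 ∣ i := by
  simp only [encode, Nat.dvd_iff_mod_eq_zero]
  split_ifs <;> simp_all

lemma smallestPeriod_encode_iff {A B C : α} (hA : A ≠ B) (hC : C ≠ B) (hAC : A ≠ C)
    {y : ℕ → Bool} {m : ℕ} : SmallestPeriod (encode A B C y) (3 * m) ↔ SmallestPeriod y m :=
  smallestPeriod_mul_iff three_pos (periodic_encode_iff B hAC y) fun j hper => by
    rw [← encode_eq_middle_iff hA hC y, ← Nat.zero_add j, hper]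
    rfl

variable [DecidableEq α]

lemma visits_eq_true {d : ℕ → α} {j : α} {i : ℕ} : visits d j i = true ↔ d i = j :=
  decide_eq_true_iff

lemma visits_eq_false {d : ℕ → α} {j : α} {i : ℕ} : visits d j i = false ↔ d i ≠ j :=
  decide_eq_false_iff_not

lemma shift_visits_encode_middle {A B C : α} (hA : A ≠ B) (hC : C ≠ B) (y : ℕ → Bool) (n : ℕ) :
    shift (3 * n) (visits (encode A B C y) B) = spread ⊥ := by
  funext i
  simp only [shift, visits, encode_eq_middle_iff hA hC, spread_bot, decide_eq_decide]
  omega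

lemma eq_of_spread_values {x v : ℕ → Bool} (h0 : x 0 = true)
    (h1 : ∀ c, x (3 * c + 1) = false) (h2 : ∀ c, x (3 * c + 2) = v c)
    (h3 : ∀ c, x (3 * c + 3) = !v c) : x = spread v := by
  funext i
  obtain rfl | ⟨c, rfl | rfl | rfl⟩ : i = 0 ∨ ∃ c, i = 3 * c + 1 ∨ i = 3 * c + 2 ∨ i = 3 * c + 3 :=
    (Nat.eq_zero_or_pos i).imp_right fun h => ⟨(i - 1) / 3, by omega⟩
  · exact h0
  · rw [h1, spread_three_mul_add_one]
  · rw [h2, spread_three_mul_add_two]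
  · rw [h3, spread_three_mul_add_three]

lemma shift_visits_encode_last {A B C : α} (hA : A ≠ B) (hC : C ≠ B) (hAC : A ≠ C)
    (y : ℕ → Bool) (n : ℕ) :
    shift (3 * n + 2) (visits (encode A B C y) (encode A B C y (3 * n + 2))) =
      spread (reflectedTail y n) := by
  refine eq_of_spread_values (visits_eq_true.2 rfl) (fun c => visits_eq_false.2 ?_) (fun c => ?_)
    fun c => ?_
  · rw [show 3 * n + 2 + (3 * c + 1) = 3 * (n + 1 + c) by ring, encode_three_mul,
      encode_three_mul_add_two]
    split_ifs
    exacts [hC.symm, hA.symm]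
  · rw [shift, visits, show 3 * n + 2 + (3 * c + 2) = 3 * (n + 1 + c) + 1 by ring,
      encode_three_mul_add_one, encode_three_mul_add_two, reflectedTail]
    cases y n <;> cases y (n + 1 + c) <;> simp [hAC, hAC.symm]
  · rw [shift, visits, show 3 * n + 2 + (3 * c + 3) = 3 * (n + 1 + c) + 2 by ring,
      encode_three_mul_add_two, encode_three_mul_add_two, reflectedTail]
    cases y n <;> cases y (n + 1 + c) <;> simp [hAC, hAC.symm]

lemma shift_visits_encode_of_const {A B C : α} (hA : A ≠ B) (hC : C ≠ B) (hAC : A ≠ C)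
    {y : ℕ → Bool} (hy : ∀ i, y i = y 0) (n : ℕ) :
    shift (3 * n + 1) (visits (encode A B C y) (encode A B C y (3 * n + 1))) = spread ⊥ := by
  refine eq_of_spread_values (visits_eq_true.2 rfl) (fun c => visits_eq_false.2 ?_)
    (fun c => visits_eq_false.2 ?_) fun c => visits_eq_true.2 ?_
  · rw [show 3 * n + 1 + (3 * c + 1) = 3 * (n + c) + 2 by ring, encode_three_mul_add_one,
      encode_three_mul_add_two, hy n, hy (n + c)]
    split_ifs
    exacts [hAC.symm, hAC]
  · rw [show 3 * n + 1 + (3 * c + 2) = 3 * (n + 1 + c) by ring, encode_three_mul,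
      encode_three_mul_add_one]
    split_ifs
    exacts [hA.symm, hC.symm]
  · rw [show 3 * n + 1 + (3 * c + 3) = 3 * (n + 1 + c) + 1 by ring, encode_three_mul_add_one,
      encode_three_mul_add_one, hy n, hy (n + 1 + c)]

lemma toLex_shift_visits_encode_lt {A B C : α} (hA : A ≠ B) (hC : C ≠ B) (hAC : A ≠ C)
    (y : ℕ → Bool) {v : ℕ → Bool} (hv : v 0 = true) (n : ℕ) :
    toLex (shift (3 * n + 1) (visits (encode A B C y) (encode A B C y (3 * n + 1)))) <
      toLex (spread v) := by
  refine ⟨2, fun i hi => ?_, ?_⟩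
  · obtain rfl | rfl : i = 0 ∨ i = 1 := by omega
    · exact visits_eq_true.2 rfl
    · refine visits_eq_false.2 ?_
      rw [show 3 * n + 1 + 1 = 3 * n + 2 by ring, encode_three_mul_add_one,
        encode_three_mul_add_two]
      split_ifs
      exacts [hAC.symm, hAC]
  · refine Bool.lt_iff.2 ⟨visits_eq_false.2 ?_, hv⟩
    rw [show 3 * n + 1 + 2 = 3 * (n + 1) by ring, encode_three_mul, encode_three_mul_add_one]
    split_ifs
    exacts [hA.symm, hC.symm]

theorem parryLE_visits_encode {A B C : α} (hA : A ≠ B) (hC : C ≠ B) (hAC : A ≠ C)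
    {y v : ℕ → Bool} (hv : v 0 = true ∨ v = ⊥)
    (h : ∀ n, toLex (reflectedTail y n) ≤ toLex v) (j : α) :
    ParryLE (visits (encode A B C y) j) (spread v) := by
  intro m _
  by_cases hj : encode A B C y (m + 1) = j
  · subst hj
    obtain ⟨n, hn | hn | hn⟩ : ∃ n, m + 1 = 3 * n ∨ m + 1 = 3 * n + 1 ∨ m + 1 = 3 * n + 2 :=
      ⟨(m + 1) / 3, by omega⟩ <;> rw [hn]
    · rw [encode_three_mul, shift_visits_encode_middle hA hC]
      exact toLex_spread_le_spread bot_le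
    · rcases hv with hv | rfl
      · exact (toLex_shift_visits_encode_lt hA hC hAC y hv n).le
      · rw [shift_visits_encode_of_const hA hC hAC (eq_head_of_reflectedTail_le_bot h)]
    · rw [shift_visits_encode_last hA hC hAC]
      exact toLex_spread_le_spread (h n)
  · exact (show toLex _ < toLex (spread v) from
      ⟨0, by simp, Bool.lt_iff.2 ⟨visits_eq_false.2 hj, rfl⟩⟩).le

end Encode

section Decode

variable {α : Type*} [DecidableEq α] {d : ℕ → α} {k : ℕ} {v : ℕ → Bool}

lemma SmallestPeriod.ne_succ_of_parryLE (hd : SmallestPeriod d k) (hk : 2 ≤ k)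
    (hP : ∀ j, ParryLE (visits d j) (spread v)) (n : ℕ) : d n ≠ d (n + 1) := by
  intro heq
  obtain ⟨p, hne, hrun⟩ := hd.exists_run_start hk heq
  have hle := Pi.apply_le_of_toLex (i := 1) (hP (d (p + 1)) p (visits_eq_false.2 hne))
    fun j hj => by
      obtain rfl : j = 0 := by omega
      exact visits_eq_true.2 rfl
  have htrue : FatSierpinski.shift (p + 1) (visits d (d (p + 1))) 1 = true :=
    visits_eq_true.2 hrun.symm
  rw [htrue] at hle
  exact hle.not_gt (show spread v 1 < true from Bool.false_lt_true)

lemma SmallestPeriod.toLex_shift_visits_le (hd : SmallestPeriod d k) (hk : 2 ≤ k)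
    (hP : ∀ j, ParryLE (visits d j) (spread v)) (n : ℕ) :
    toLex (FatSierpinski.shift n (visits d (d n))) ≤ toLex (spread v) := by
  have hprev : visits d (d n) (n + k - 1) = false := visits_eq_false.2 fun h =>
    hd.ne_succ_of_parryLE hk hP (n + k - 1) (by
      rw [h, show n + k - 1 + 1 = n + k by omega, hd.periodic])
  convert hP (d n) (n + k - 1) hprev using 2
  funext i
  simp only [FatSierpinski.shift, visits, show n + k - 1 + 1 + i = n + i + k by omega,
    hd.periodic _]

lemma spread_critSeq_zero_one :
    ∀ i < 9, spread (critSeq 0 1) i = decide (i = 0 ∨ i = 2 ∨ i = 5) := by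
  decide

lemma le_spread_critSeq_zero_one {x : ℕ → Bool}
    (hx : toLex x ≤ toLex (spread (critSeq 0 1))) (hadj : ∀ i, x i = true → x (i + 1) = false)
    (h0 : x 0 = true) (h2 : x 2 = true) :
    x 4 = false ∧ (x 5 = true → x 7 = false ∧ x 8 = false) := by
  have hzero : ∀ i < 9, ¬(i = 0 ∨ i = 2 ∨ i = 5) →
      (∀ j < i, x j = decide (j = 0 ∨ j = 2 ∨ j = 5)) → x i = false := fun i hi hne hagree => by
    have hle := Pi.apply_le_of_toLex (i := i) hx fun j hj => by
      rw [spread_critSeq_zero_one j (hj.trans hi)]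
      exact hagree j hj
    rw [spread_critSeq_zero_one i hi, decide_eq_false hne] at hle
    exact Bool.eq_false_of_le_false hle
  have h1 := hadj 0 h0
  have h3 := hadj 2 h2
  have h4 := hzero 4 (by norm_num) (by norm_num) fun j hj => by interval_cases j <;> simpa
  refine ⟨h4, fun h5 => ?_⟩
  have h6 := hadj 5 h5
  have h7 := hzero 7 (by norm_num) (by norm_num) fun j hj => by interval_cases j <;> simpa
  exact ⟨h7, hzero 8 (by norm_num) (by norm_num) fun j hj => by interval_cases j <;> simpa⟩

lemma ne_of_return (hadj : ∀ n, d n ≠ d (n + 1))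
    (hle : ∀ n, toLex (shift n (visits d (d n))) ≤ toLex (spread (critSeq 0 1))) {n : ℕ}
    (hn : d n = d (n + 2)) :
    d (n + 4) ≠ d n ∧ (d (n + 5) = d n → d (n + 7) ≠ d n ∧ d (n + 8) ≠ d n) := by
  simpa only [shift, visits, decide_eq_true_eq, decide_eq_false_iff_not] using
    le_spread_critSeq_zero_one (hle n)
      (fun i hi => visits_eq_false.2 fun h => hadj _ ((visits_eq_true.1 hi).trans h.symm))
      (visits_eq_true.2 rfl) (visits_eq_true.2 hn.symm)

lemma eq_of_ne_of_ne {a b c e : Fin 3} (hab : a ≠ b) (hca : c ≠ a) (hcb : c ≠ b) (hea : e ≠ a)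
    (heb : e ≠ b) : c = e := by
  omega

lemma not_consecutive_returns {d : ℕ → Fin 3} (hadj : ∀ n, d n ≠ d (n + 1))
    (hle : ∀ n, toLex (shift n (visits d (d n))) ≤ toLex (spread (critSeq 0 1))) {n : ℕ}
    (hn : d n = d (n + 2)) : d (n + 1) ≠ d (n + 3) := by
  intro h13
  obtain ⟨h40, hn0⟩ := ne_of_return hadj hle hn
  obtain ⟨h51, hn1⟩ := ne_of_return hadj hle h13
  have h41 : d (n + 4) ≠ d (n + 1) := h13 ▸ (hadj (n + 3)).symm
  have h50 : d (n + 5) = d n :=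
    eq_of_ne_of_ne h41 (hadj (n + 4)).symm h51 h40.symm (hadj n)
  obtain ⟨h70, h80⟩ := hn0 h50
  have h60 : d (n + 6) ≠ d n := h50 ▸ (hadj (n + 5)).symm
  by_cases h61 : d (n + 6) = d (n + 1)
  · exact (hn1 h61).1 ((eq_of_ne_of_ne h70 (hadj (n + 7)).symm h80
      (h61 ▸ hadj (n + 6)) (hadj n).symm))
  · have h46 : d (n + 4) = d (n + 6) := eq_of_ne_of_ne (hadj n) h40 h41 h60 h61
    exact (ne_of_return hadj hle h46).1 (eq_of_ne_of_ne h70 (hadj (n + 7)).symm h80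
      (h46 ▸ hadj (n + 6)) h40)

lemma exists_next_return {d : ℕ → Fin 3} (hadj : ∀ n, d n ≠ d (n + 1))
    (hle : ∀ n, toLex (shift n (visits d (d n))) ≤ toLex (spread (critSeq 0 1))) {n : ℕ}
    (hn : d n = d (n + 2)) :
    ∃ t, 0 < t ∧ 3 ∣ t ∧ d (n + t) = d (n + t + 2) ∧
      ∀ s, 0 < s → s < t → d (n + s) ≠ d (n + s + 2) := by
  obtain ⟨h40, hn0⟩ := ne_of_return hadj hle hn
  have h13 : d (n + 1) ≠ d (n + 3) := not_consecutive_returns hadj hle hn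
  have h24 : d (n + 2) ≠ d (n + 4) := hn ▸ h40.symm
  have h30 : d (n + 3) ≠ d n := hn ▸ (hadj (n + 2)).symm
  by_cases h35 : d (n + 3) = d (n + 5)
  · refine ⟨3, by norm_num, dvd_rfl, h35, fun s hs hst => ?_⟩
    interval_cases s
    exacts [h13, h24]
  · have h50 : d (n + 5) = d n :=
      eq_of_ne_of_ne (hadj (n + 3)) (Ne.symm h35) (hadj (n + 4)).symm h30.symm h40.symm
    obtain ⟨h70, h80⟩ := hn0 h50
    have h60 : d (n + 6) ≠ d n := h50 ▸ (hadj (n + 5)).symm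
    have h46 : d (n + 4) ≠ d (n + 6) := fun h46 =>
      (ne_of_return hadj hle h46).1 (eq_of_ne_of_ne h70 (hadj (n + 7)).symm h80
        (h46 ▸ hadj (n + 6)) h40)
    have h57 : d (n + 5) ≠ d (n + 7) := h50 ▸ h70.symm
    have h68 : d (n + 6) = d (n + 8) :=
      eq_of_ne_of_ne h70.symm h60 (hadj (n + 6)) h80 (hadj (n + 7)).symm
    refine ⟨6, by norm_num, by norm_num, h68, fun s hs hst => ?_⟩
    interval_cases s
    exacts [h13, h24, h35, h46, h57]

lemma exists_return_mod_three {d : ℕ → Fin 3} (hadj : ∀ n, d n ≠ d (n + 1))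
    (hle : ∀ n, toLex (shift n (visits d (d n))) ≤ toLex (spread (critSeq 0 1))) :
    ∃ p, ∀ m, shift p d m = shift p d (m + 2) → m % 3 = 2 := by
  by_cases hret : ∃ n, d n = d (n + 2)
  · obtain ⟨n, hn⟩ := hret
    refine ⟨n + 1, fun m hm => ?_⟩
    have hdvd : 3 ∣ m + 1 :=
      dvd_of_gaps (P := fun n => d n = d (n + 2)) (Q := fun n => d n = d (n + 2))
        (fun _ => exists_next_return hadj hle) (m + 1) n hn (by
          rw [show n + (m + 1) = n + 1 + m by ring]
          exact hm)
    omega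
  · exact ⟨0, fun m hm => (hret ⟨_, hm⟩).elim⟩

lemma exists_eq_encode {e : ℕ → Fin 3} (hadj : ∀ n, e n ≠ e (n + 1))
    (hret : ∀ m, e m = e (m + 2) → m % 3 = 2) :
    ∃ A B C y, A ≠ B ∧ C ≠ B ∧ A ≠ C ∧ e = encode A B C y := by
  have hskip : ∀ m, m % 3 ≠ 2 → e m ≠ e (m + 2) := fun m => mt (hret m)
  have hmid : ∀ i, e (3 * i) = e 0 := fun i => by
    induction i with
    | zero => rfl
    | succ i ih =>
      rw [← ih]
      exact eq_of_ne_of_ne (hadj (3 * i + 1)) (hskip (3 * i + 1) (by omega)).symm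
        (hadj (3 * i + 2)).symm (hadj (3 * i)) (hskip (3 * i) (by omega))
  have h1 : ∀ i, e (3 * i + 1) ≠ e 0 := fun i => hmid i ▸ (hadj _).symm
  have h2 : ∀ i, e (3 * i + 2) ≠ e 0 := fun i => hmid i ▸ (hskip (3 * i) (by omega)).symm
  refine ⟨e 1, e 0, e 2, fun i => decide (e (3 * i + 1) = e 1), h1 0, h2 0, hadj 1,
    funext fun m => ?_⟩
  obtain ⟨i, rfl | rfl | rfl⟩ : ∃ i, m = 3 * i ∨ m = 3 * i + 1 ∨ m = 3 * i + 2 :=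
    ⟨m / 3, by omega⟩
  · rw [encode_three_mul, hmid]
  · by_cases h : e (3 * i + 1) = e 1
    · simp [encode_three_mul_add_one, h]
    · simp only [encode_three_mul_add_one, h, decide_false, Bool.false_eq_true, if_false]
      exact eq_of_ne_of_ne (h1 0) h (h1 i) (hadj 1).symm (h2 0)
  · by_cases h : e (3 * i + 1) = e 1
    · simp only [encode_three_mul_add_two, h, decide_true, if_true]
      exact eq_of_ne_of_ne (h1 0) (h ▸ (hadj _).symm) (h2 i) (hadj 1).symm (h2 0)
    · simp only [encode_three_mul_add_two, h, decide_false, Bool.false_eq_true, if_false]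
      exact eq_of_ne_of_ne (h1 i) (hadj _).symm (h2 i) (Ne.symm h) (h1 0)

theorem exists_spread_critSeq_le {d : ℕ → Fin 3} {a b : ℕ}
    (hd : SmallestPeriod d (3 * (2 ^ a * (2 * b + 1)))) :
    ∃ j n, visits d j n = false ∧
      toLex (spread (critSeq a b)) ≤ toLex (shift (n + 1) (visits d j)) := by
  by_contra! hlt
  have hk : 2 ≤ 3 * (2 ^ a * (2 * b + 1)) := by
    have : 0 < 2 ^ a * (2 * b + 1) := by positivity
    omega
  have hP : ∀ j, ParryLE (visits d j) (spread (critSeq 0 1)) := fun j n hn =>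
    (hlt j n hn).le.trans (toLex_spread_le_spread (toLex_critSeq_le a b))
  have hadj : ∀ n, d n ≠ d (n + 1) := hd.ne_succ_of_parryLE hk hP
  obtain ⟨p, hp⟩ := exists_return_mod_three hadj (hd.toLex_shift_visits_le hk hP)
  obtain ⟨A, B, C, y, hA, hC, hAC, he⟩ :=
    exists_eq_encode (e := shift p d) (fun n => hadj (p + n)) hp
  have hy : SmallestPeriod y (2 ^ a * (2 * b + 1)) :=
    (smallestPeriod_encode_iff hA hC hAC).1 (he ▸ hd.shift p)
  obtain ⟨n, hn⟩ := exists_critSeq_le_reflectedTail hy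
  have hshift : shift (p + (3 * n + 1) + 1) (visits d (d (p + (3 * n + 2)))) =
      spread (reflectedTail y n) := by
    rw [← shift_visits_encode_last hA hC hAC, ← he]
    funext i
    rw [shift, shift, visits, visits, show p + (3 * n + 1) + 1 + i = p + (3 * n + 2 + i) by ring]
    rfl
  refine (hlt (d (p + (3 * n + 2))) (p + (3 * n + 1)) (visits_eq_false.2 (hadj _))).not_ge ?_
  rw [hshift]
  exact toLex_spread_le_spread hn

theorem exists_parryLE_spread_critSeq (a b : ℕ) :
    ∃ d : ℕ → Fin 3, SmallestPeriod d (3 * (2 ^ a * (2 * b + 1))) ∧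
      (∀ j, ParryLE (visits d j) (spread (critSeq a b))) ∧
      ∃ j n, visits d j n = false ∧ shift (n + 1) (visits d j) = spread (critSeq a b) := by
  obtain ⟨y, hy, hle⟩ := exists_reflectedTail_le_critSeq a b
  have hA : (0 : Fin 3) ≠ 1 := by decide
  have hC : (2 : Fin 3) ≠ 1 := by decide
  have hAC : (0 : Fin 3) ≠ 2 := by decide
  have hper := (smallestPeriod_encode_iff hA hC hAC).2 hy
  have hparry := parryLE_visits_encode hA hC hAC (critSeq_head_or_eq_bot a b) hle
  obtain ⟨j, n, hn, hge⟩ := exists_spread_critSeq_le hper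
  exact ⟨encode 0 1 2 y, hper, hparry, j, n, hn, toLex.injective (le_antisymm (hparry j n hn) hge)⟩

end Decode
end ThreeLetters

section Values

open Cardinal

variable {r : ℝ} {x v w : ℕ → Bool}

/-- The value `∑ xᵢ r ^ (i + 1)` of the binary sequence `x` in base `r⁻¹`. -/
def value (r : ℝ) (x : ℕ → Bool) : ℝ := r * cantorFunction r x

lemma hasSum_value (h0 : 0 ≤ r) (h1 : r < 1) (x : ℕ → Bool) :
    HasSum (fun i => if x i then r ^ (i + 1) else 0) (value r x) := by
  have hterm : (fun i => r * cantorFunctionAux r x i) = fun i => if x i then r ^ (i + 1) else 0 :=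
    funext fun i => by cases h : x i <;> simp [cantorFunctionAux, h, pow_succ']
  exact hterm ▸ (summable_cantor_function x h0 h1).hasSum.mul_left r

lemma value_nonneg (h0 : 0 ≤ r) (x : ℕ → Bool) : 0 ≤ value r x :=
  mul_nonneg h0 (tsum_nonneg fun _ => cantorFunctionAux_nonneg h0)

lemma value_eq_head_add (h0 : 0 ≤ r) (h1 : r < 1) (x : ℕ → Bool) :
    value r x = r * ((if x 0 then 1 else 0) + value r (shift 1 x)) := by
  rw [value, value, cantorFunction_succ x h0 h1,
    show (fun n => x (n + 1)) = shift 1 x from funext fun n => congrArg x (add_comm n 1)]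
  cases x 0 <;> rfl

lemma value_top (h0 : 0 ≤ r) (h1 : r < 1) : value r ⊤ = r * (1 - r)⁻¹ :=
  (hasSum_value h0 h1 ⊤).unique (by
    simpa [pow_succ'] using (hasSum_geometric_of_lt_one h0 h1).mul_left r)

lemma value_le (h0 : 0 ≤ r) (h1 : r < 1) (x : ℕ → Bool) : value r x ≤ r * (1 - r)⁻¹ := by
  rw [← value_top h0 h1]
  exact mul_le_mul_of_nonneg_left (cantorFunction_le h0 h1 fun _ _ => rfl) h0

lemma value_pos (h0 : 0 < r) (h1 : r < 1) (hx : ∃ i, x i = true) : 0 < value r x := by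
  obtain ⟨i, hi⟩ := hx
  exact mul_pos h0 ((summable_cantor_function x h0.le h1).tsum_pos
    (fun _ => cantorFunctionAux_nonneg h0.le) i (by rw [cantorFunctionAux_true hi]; positivity))

lemma value_sub_value (h0 : 0 ≤ r) (h1 : r < 1) {m : ℕ} (h : ∀ i < m, x i = v i)
    (hx : x m = false) (hv : v m = true) :
    value r v - value r x =
      r ^ (m + 1) * (1 + value r (shift (m + 1) v) - value r (shift (m + 1) x)) := by
  induction m generalizing x v with
  | zero =>
    rw [value_eq_head_add h0 h1 v, value_eq_head_add h0 h1 x, hx, hv]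
    norm_num
    ring
  | succ m ih =>
    have ih := ih (x := shift 1 x) (v := shift 1 v) (fun i hi => h (1 + i) (by omega))
      (by rw [shift, add_comm, hx]) (by rw [shift, add_comm, hv])
    rw [shift_shift, shift_shift, Nat.add_comm 1] at ih
    rw [value_eq_head_add h0 h1 v, value_eq_head_add h0 h1 x, h 0 m.succ_pos, pow_succ' r (m + 1),
      mul_assoc, ← ih]
    ring

lemma exists_value_sub_value_shift (h0 : 0 ≤ r) (h1 : r < 1) {n : ℕ}
    (h : toLex (shift n w) < toLex v) :
    ∃ m, w (n + m) = false ∧ value r v - value r (shift n w) =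
      r ^ (m + 1) * (1 + value r (shift (m + 1) v) - value r (shift (n + m + 1) w)) := by
  obtain ⟨m, hagree, hlt⟩ := h
  obtain ⟨hw, hv⟩ := Bool.lt_iff.1 hlt
  have hdiff := value_sub_value (x := shift n w) (v := v) h0 h1 hagree hw hv
  rw [shift_shift] at hdiff
  exact ⟨m, hw, hdiff⟩

lemma ParryLE.value_shift_le_one (h : ParryLE w v) (h0 : 0 ≤ r) (h1 : r < 1)
    (hv : value r v ≤ 1) {n : ℕ} (hn : w n = false) : value r (shift (n + 1) w) ≤ 1 := by
  set T : Set ℝ := {t | ∃ n, w n = false ∧ value r (shift (n + 1) w) = t}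
  have hT : BddAbove T := ⟨r * (1 - r)⁻¹, fun t ⟨n, _, ht⟩ => ht ▸ value_le h0 h1 _⟩
  refine (le_csSup hT ⟨n, hn, rfl⟩).trans (le_of_not_gt fun hS => ?_)
  have hstep : ∀ t ∈ T, t ≤ 1 + r * (sSup T - 1) := by
    rintro t ⟨n, hn, rfl⟩
    rcases (h n hn).lt_or_eq with hlt | heq
    · obtain ⟨m, hm, hdiff⟩ := exists_value_sub_value_shift h0 h1 hlt
      have hnext : value r (shift (n + 1 + m + 1) w) ≤ sSup T := le_csSup hT ⟨_, hm, rfl⟩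
      calc value r (shift (n + 1) w)
          = value r v + r ^ (m + 1) *
              (value r (shift (n + 1 + m + 1) w) - 1 - value r (shift (m + 1) v)) := by
            linear_combination -hdiff
        _ ≤ 1 + r ^ (m + 1) * (sSup T - 1) := by
            have := value_nonneg h0 (shift (m + 1) v)
            exact add_le_add hv (mul_le_mul_of_nonneg_left (by linarith) (pow_nonneg h0 _))
        _ ≤ 1 + r * (sSup T - 1) := by
            have := pow_le_of_le_one h0 h1.le m.succ_ne_zero
            exact add_le_add_right (mul_le_mul_of_nonneg_right this (by linarith)) 1
    · rw [toLex.injective heq]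
      exact hv.trans (le_add_of_nonneg_right (mul_nonneg h0 (by linarith)))
  have hsup : sSup T ≤ 1 + r * (sSup T - 1) := csSup_le ⟨_, n, hn, rfl⟩ hstep
  nlinarith

lemma ParryLE.value_shift_le (h : ParryLE w v) (h0 : 0 ≤ r) (h1 : r < 1)
    (hv : value r v ≤ 1) {n : ℕ} (hn : w n = false) : value r (shift (n + 1) w) ≤ value r v := by
  rcases (h n hn).lt_or_eq with hlt | heq
  · obtain ⟨m, hm, hdiff⟩ := exists_value_sub_value_shift h0 h1 hlt
    rw [← sub_nonneg, hdiff]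
    have := h.value_shift_le_one h0 h1 hv hm
    have := value_nonneg h0 (shift (m + 1) v)
    exact mul_nonneg (pow_nonneg h0 _) (by linarith)
  · rw [toLex.injective heq]

lemma ParryLE.value_shift_lt (h : ParryLE w v) (h0 : 0 < r) (h1 : r < 1)
    (hv : value r v ≤ 1) (hones : ∀ N, ∃ i, shift N v i = true) {n : ℕ}
    (hlt : toLex (shift (n + 1) w) < toLex v) : value r (shift (n + 1) w) < value r v := by
  obtain ⟨m, hm, hdiff⟩ := exists_value_sub_value_shift h0.le h1 hlt
  rw [← sub_pos, hdiff]
  have := h.value_shift_le_one h0.le h1 hv hm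
  have := value_pos h0 h1 (hones (m + 1))
  exact mul_pos (pow_pos h0 _) (by linarith)

lemma strictMonoOn_value (hx : ∃ i, x i = true) :
    StrictMonoOn (fun r => value r x) (Ico 0 1) := by
  obtain ⟨i, hi⟩ := hx
  intro r hr s hs hrs
  refine hasSum_lt (i := i) (fun n => ?_) ?_ (hasSum_value hr.1 hr.2 x) (hasSum_value hs.1 hs.2 x)
  · have := hr.1
    dsimp only
    split_ifs
    · gcongr
    · exact le_rfl
  · simpa only [hi, if_true] using pow_lt_pow_left₀ hrs hr.1 i.succ_ne_zero

lemma continuousOn_value {c : ℝ} (hc0 : 0 ≤ c) (hc1 : c < 1) (x : ℕ → Bool) :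
    ContinuousOn (fun r => value r x) (Icc 0 c) := by
  refine continuousOn_id.mul (continuousOn_tsum (u := fun i => c ^ i) (fun i => ?_)
    (summable_geometric_of_lt_one hc0 hc1) fun i r hr => ?_)
  · cases h : x i <;> simp only [cantorFunctionAux, h, cond_true, cond_false] <;> fun_prop
  · have := hr.1
    rw [Real.norm_of_nonneg (cantorFunctionAux_nonneg hr.1)]
    cases h : x i
    · rw [cantorFunctionAux_false h]
      positivity
    · rw [cantorFunctionAux_true h]
      gcongr
      exact hr.2

lemma exists_shift_spread_eq_true (v : ℕ → Bool) (N : ℕ) : ∃ i, shift N (spread v) i = true := by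
  cases h : v N
  · exact ⟨2 * N + 3, by
      rw [shift, show N + (2 * N + 3) = 3 * N + 3 by ring, spread_three_mul_add_three, h]; rfl⟩
  · exact ⟨2 * N + 2, by
      rw [shift, show N + (2 * N + 2) = 3 * N + 2 by ring, spread_three_mul_add_two, h]⟩

lemma value_spread (h0 : 0 ≤ r) (h1 : r < 1) (v : ℕ → Bool) :
    value r (spread v) = r + r ^ 2 * value r (shift 2 (spread v)) := by
  rw [value_eq_head_add h0 h1, value_eq_head_add h0 h1 (shift 1 _), shift_shift]
  simp only [shift, spread, if_true, Bool.false_eq_true, if_false]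
  ring

lemma sq_le_value_shift_spread (h0 : 0 ≤ r) (h1 : r < 1) (v : ℕ → Bool) :
    r ^ 2 ≤ value r (shift 2 (spread v)) := by
  have htail := value_nonneg h0 (shift 1 (shift 1 (shift 2 (spread v))))
  rw [value_eq_head_add h0 h1, value_eq_head_add h0 h1 (shift 1 _),
    show shift 2 (spread v) 0 = v 0 from spread_three_mul_add_two v 0,
    show shift 1 (shift 2 (spread v)) 0 = !v 0 from spread_three_mul_add_three v 0]
  cases v 0 <;> norm_num <;> nlinarith [mul_nonneg h0 h0, mul_nonneg (mul_nonneg h0 h0) htail]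

theorem exists_value_spread_eq_one (v : ℕ → Bool) :
    ∃ r ∈ Ioo (1 / 2 : ℝ) (3 / 4), value r (spread v) = 1 := by
  have hleft : value (1 / 2) (spread v) < 1 := by
    have := value_le (r := 1 / 2) (by norm_num) (by norm_num) (shift 2 (spread v))
    rw [value_spread (by norm_num) (by norm_num)]
    norm_num at this ⊢
    linarith
  have hright : 1 < value (3 / 4) (spread v) := by
    have := sq_le_value_shift_spread (r := 3 / 4) (by norm_num) (by norm_num) v
    rw [value_spread (by norm_num) (by norm_num)]
    linarith
  have hcont : ContinuousOn (fun r => value r (spread v)) (Icc (1 / 2) (3 / 4)) :=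
    (continuousOn_value (by norm_num) (by norm_num) _).mono (Icc_subset_Icc_left (by norm_num))
  exact intermediate_value_Ioo (by norm_num) hcont ⟨hleft, hright⟩

end Values

section Gasket

variable {β : ℝ}

/-- The digits of `Ω`, numbered as the corners of `Δ_β` are by `coord`. -/
def digit : Fin 3 → ℝ × ℝ := ![(1, 0), (0, 1), (0, 0)]

lemma range_digit : range digit = OmegaR := by
  simp only [digit, OmegaR, Matrix.range_cons, Matrix.range_empty, union_empty, singleton_union]
  rw [pair_comm, insert_comm]

lemma digit_mem (c : Fin 3) : digit c ∈ OmegaR := range_digit ▸ mem_range_self c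

lemma digit_injective : Function.Injective digit := by
  intro c d h
  fin_cases c <;> fin_cases d <;> simp_all [digit]

lemma smallestPeriod_digit_iff {e : ℕ → Fin 3} {k : ℕ} :
    SmallestPeriod (digit ∘ e) k ↔ SmallestPeriod e k := by
  simp only [SmallestPeriod, Function.comp_apply, digit_injective.eq_iff, ne_eq]

/-- The barycentric coordinates of `p` in the triangle `Δ_β`, normalized to add up to
`∑ β⁻ⁱ` instead of `1`, so that digit sequences have binary sequences as coordinates. -/
def coord (β : ℝ) (p : ℝ × ℝ) : Fin 3 → ℝ := ![p.1, p.2, β⁻¹ * (1 - β⁻¹)⁻¹ - p.1 - p.2]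

lemma sum_coord (β : ℝ) (p : ℝ × ℝ) : ∑ j, coord β p j = β⁻¹ * (1 - β⁻¹)⁻¹ := by
  simp [Fin.sum_univ_three, coord]

lemma coord_combination {a b : ℝ} (hab : a + b = 1) (p q : ℝ × ℝ) :
    coord β (a • p + b • q) = a • coord β p + b • coord β q := by
  obtain rfl : b = 1 - a := by linarith
  funext j
  fin_cases j
  · simp [coord]
  · simp [coord]
  · simp [coord]; ring

lemma coord_fmap (hβ : 1 < β) (c : Fin 3) (p : ℝ × ℝ) (j : Fin 3) :
    coord β (fmap β (digit c) p) j = β⁻¹ * ((if c = j then 1 else 0) + coord β p j) := by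
  have : β - 1 ≠ 0 := by linarith
  fin_cases c <;> fin_cases j <;> simp [coord, fmap, digit] <;> field_simp <;> ring

lemma hasSum_indicator_visits {r : ℝ} (h0 : 0 ≤ r) (h1 : r < 1) (e : ℕ → Fin 3) (j : Fin 3) :
    HasSum (fun i => if e i = j then r ^ (i + 1) else 0) (value r (visits e j)) := by
  simpa only [visits, decide_eq_true_eq] using hasSum_value h0 h1 (visits e j)

lemma tsum_digit (hβ : 1 < β) (e : ℕ → Fin 3) :
    ∑' i : ℕ, (β ^ (i + 1))⁻¹ • digit (e i) =
      (value β⁻¹ (visits e 0), value β⁻¹ (visits e 1)) := by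
  have h := hasSum_indicator_visits (r := β⁻¹) (by positivity) (inv_lt_one_of_one_lt₀ hβ) e
  refine HasSum.tsum_eq (((h 0).prodMk (h 1)).congr_fun fun i => ?_)
  generalize e i = c
  fin_cases c <;> simp [digit]

lemma coord_tsum_digit (hβ : 1 < β) (e : ℕ → Fin 3) (j : Fin 3) :
    coord β (∑' i : ℕ, (β ^ (i + 1))⁻¹ • digit (e i)) j = value β⁻¹ (visits e j) := by
  have hr : β⁻¹ < 1 := inv_lt_one_of_one_lt₀ hβ
  have h0 : 0 ≤ β⁻¹ := by positivity
  have hsum : ∑ j, value β⁻¹ (visits e j) = β⁻¹ * (1 - β⁻¹)⁻¹ := by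
    refine (hasSum_sum fun j _ => hasSum_indicator_visits h0 hr e j).unique ?_
    simpa [pow_succ'] using (hasSum_geometric_of_lt_one h0 hr).mul_left β⁻¹
  rw [Fin.sum_univ_three] at hsum
  rw [tsum_digit hβ]
  fin_cases j
  · rfl
  · rfl
  · calc β⁻¹ * (1 - β⁻¹)⁻¹ - value β⁻¹ (visits e 0) - value β⁻¹ (visits e 1)
      _ = value β⁻¹ (visits e 2) := by rw [← hsum]; ring

lemma smul_digit_mem_Delta (hβ : 1 < β) (c : Fin 3) :
    (β⁻¹ * (1 - β⁻¹)⁻¹) • digit c ∈ Delta β := by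
  refine subset_convexHull ℝ _ ⟨fun _ => digit c, fun _ => digit_mem c, ?_⟩
  have hgeom := (hasSum_geometric_of_lt_one (r := β⁻¹) (by positivity)
    (inv_lt_one_of_one_lt₀ hβ)).mul_left β⁻¹
  simpa only [pow_succ', mul_inv, inv_pow] using (hgeom.smul_const (digit c)).tsum_eq.symm

lemma eq_sum_coord_smul_digit (hβ : 1 < β) (p : ℝ × ℝ) :
    p = ∑ c, (coord β p c / (β⁻¹ * (1 - β⁻¹)⁻¹)) • (β⁻¹ * (1 - β⁻¹)⁻¹) • digit c := by
  have hM : β⁻¹ * (1 - β⁻¹)⁻¹ ≠ 0 := by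
    have := inv_lt_one_of_one_lt₀ hβ
    have : 0 < β⁻¹ := by positivity
    exact mul_ne_zero this.ne' (inv_ne_zero (by linarith))
  simp only [smul_smul, div_mul_cancel₀ _ hM]
  ext <;> simp [Fin.sum_univ_three, coord, digit]

lemma mem_Delta_iff (hβ : 1 < β) (p : ℝ × ℝ) : p ∈ Delta β ↔ ∀ j, 0 ≤ coord β p j := by
  have h0 : 0 < β⁻¹ := by positivity
  have hM : 0 < β⁻¹ * (1 - β⁻¹)⁻¹ :=
    mul_pos h0 (inv_pos.2 (sub_pos.2 (inv_lt_one_of_one_lt₀ hβ)))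
  refine ⟨fun hp => ?_, fun hp => ?_⟩
  · have hconv : Convex ℝ {p | ∀ j, 0 ≤ coord β p j} := fun x hx y hy a b ha hb hab j => by
      rw [coord_combination hab]
      exact add_nonneg (mul_nonneg ha (hx j)) (mul_nonneg hb (hy j))
    refine convexHull_min ?_ hconv hp
    rintro _ ⟨d, hd, rfl⟩ j
    choose e he using fun i => range_digit.symm.subset (hd i)
    simp only [← he, coord_tsum_digit hβ]
    exact value_nonneg h0.le _
  · rw [eq_sum_coord_smul_digit hβ p]
    refine (convex_convexHull ℝ (Sfat β)).sum_mem (fun j _ => div_nonneg (hp j) hM.le) ?_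
      fun j _ => smul_digit_mem_Delta hβ j
    rw [← Finset.sum_div, sum_coord, div_self hM.ne']

lemma mem_fmap_image_iff (hβ : 1 < β) (c : Fin 3) (p : ℝ × ℝ) :
    p ∈ fmap β (digit c) '' Delta β ↔ ∀ j, (if c = j then β⁻¹ else 0) ≤ coord β p j := by
  have h0 : 0 < β⁻¹ := by positivity
  have hinv : fmap β (digit c) (β • p - digit c) = p := by
    rw [fmap, sub_add_cancel, inv_smul_smul₀ (by positivity)]
  have hcoord : ∀ x, (∀ j, (if c = j then β⁻¹ else 0) ≤ coord β (fmap β (digit c) x) j) ↔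
      ∀ j, 0 ≤ coord β x j := fun x => forall_congr' fun j => by
    rw [coord_fmap hβ, mul_add, mul_ite, mul_one, mul_zero, le_add_iff_nonneg_right,
      mul_nonneg_iff_of_pos_left h0]
  refine ⟨fun ⟨x, hx, hxp⟩ => ?_, fun hp => ⟨β • p - digit c, ?_, hinv⟩⟩
  · rwa [← hxp, hcoord, ← mem_Delta_iff hβ]
  · rwa [mem_Delta_iff hβ, ← hcoord, hinv]

lemma coord_tsum_digit_eq_head_add (hβ : 1 < β) (e : ℕ → Fin 3) (j : Fin 3) :
    coord β (∑' i : ℕ, (β ^ (i + 1))⁻¹ • digit (e i)) j =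
      β⁻¹ * ((if e 0 = j then 1 else 0) + value β⁻¹ (shift 1 (visits e j))) := by
  rw [coord_tsum_digit hβ, value_eq_head_add (by positivity) (inv_lt_one_of_one_lt₀ hβ)]
  simp only [visits, decide_eq_true_eq]

lemma tsum_digit_mem_Ofat_iff (hβ : 1 < β) (e : ℕ → Fin 3) :
    ∑' i : ℕ, (β ^ (i + 1))⁻¹ • digit (e i) ∈ Ofat β ↔
      ∃ j, visits e j 0 = false ∧ 1 ≤ value β⁻¹ (shift 1 (visits e j)) := by
  have h0 : 0 < β⁻¹ := by positivity
  have himage : ∀ c, ∑' i : ℕ, (β ^ (i + 1))⁻¹ • digit (e i) ∈ fmap β (digit c) '' Delta β ↔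
      (e 0 ≠ c → 1 ≤ value β⁻¹ (shift 1 (visits e c))) := fun c => by
    simp only [mem_fmap_image_iff hβ, coord_tsum_digit_eq_head_add hβ]
    refine ⟨fun h hc => ?_, fun h j => ?_⟩
    · have := h c
      rw [if_pos rfl, if_neg hc, zero_add] at this
      exact (le_mul_iff_one_le_right h0).1 this
    · have hv := value_nonneg h0.le (shift 1 (visits e j))
      by_cases hcj : c = j
      · subst hcj
        rw [if_pos rfl, le_mul_iff_one_le_right h0]
        split_ifs with hc
        · linarith
        · linarith [h hc]
      · rw [if_neg hcj]
        split_ifs <;> positivity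
  simp only [Ofat, ← range_digit, biUnion_range, mem_iUnion, mem_inter_iff, himage,
    digit_injective.ne_iff, exists_prop, visits_eq_false]
  refine ⟨fun ⟨c, d, hcd, hc, hd⟩ => ?_, fun ⟨j, hj, hv⟩ => ⟨e 0, j, hj, fun h => (h rfl).elim,
    fun _ => hv⟩⟩
  by_cases hec : e 0 = c
  · exact ⟨d, hec ▸ hcd, hd (hec ▸ hcd)⟩
  · exact ⟨c, hec, hc hec⟩

theorem digit_comp_mem_Ufat_iff (hβ : 1 < β) (e : ℕ → Fin 3) :
    digit ∘ e ∈ Ufat β ↔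
      ∀ j n, visits e j n = false → value β⁻¹ (shift (n + 1) (visits e j)) < 1 := by
  have htail : ∀ n, ∑' i : ℕ, (β ^ (i + 1))⁻¹ • (digit ∘ e) (n + i) ∈ Ofat β ↔
      ∃ j, visits e j n = false ∧ 1 ≤ value β⁻¹ (shift (n + 1) (visits e j)) := fun n =>
    (tsum_digit_mem_Ofat_iff hβ (shift n e)).trans (exists_congr fun j => by
      rw [show visits (shift n e) j = shift n (visits e j) from rfl, shift_shift]; rfl)
  refine ⟨fun h j n hn => not_le.1 fun hv => h.2 n ((htail n).2 ⟨j, hn, hv⟩),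
    fun h => ⟨fun i => digit_mem _, fun n hn => ?_⟩⟩
  obtain ⟨j, hj, hv⟩ := (htail n).1 hn
  exact hv.not_gt (h j n hj)

end Gasket

section CriticalBases

theorem exists_mem_Ufat_iff {β : ℝ} (hβ : 1 < β) (a b : ℕ) :
    (∃ d ∈ Ufat β, SmallestPeriod d (3 * (2 ^ a * (2 * b + 1)))) ↔
      value β⁻¹ (spread (critSeq a b)) < 1 := by
  have h0 : 0 ≤ β⁻¹ := by positivity
  have h1 : β⁻¹ < 1 := inv_lt_one_of_one_lt₀ hβ
  obtain ⟨e, hper, hparry, j, n, hn, hmax⟩ := exists_parryLE_spread_critSeq a b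
  refine ⟨fun ⟨d, hd, hdper⟩ => ?_, fun hlt => ?_⟩
  · choose e' he' using fun i => range_digit.symm.subset (hd.1 i)
    obtain rfl : digit ∘ e' = d := funext he'
    obtain ⟨j', n', hn', hle⟩ := exists_spread_critSeq_le (smallestPeriod_digit_iff.1 hdper)
    have hlt := (digit_comp_mem_Ufat_iff hβ e').1 hd j' n' hn'
    have hdom : ParryLE (visits e j) (shift (n' + 1) (visits e' j')) := fun i hi =>
      (hparry j i hi).trans hle
    exact hmax ▸ (hdom.value_shift_le h0 h1 hlt.le hn).trans_lt hlt
  · refine ⟨digit ∘ e, (digit_comp_mem_Ufat_iff hβ e).2 fun i m hm => ?_,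
      smallestPeriod_digit_iff.2 hper⟩
    exact ((hparry i).value_shift_le h0 h1 hlt.le hm).trans_lt hlt

lemma value_spread_lt_value_spread_iff {r s : ℝ} (hr : r ∈ Ico 0 1) (hs : s ∈ Ico 0 1)
    (v : ℕ → Bool) : value r (spread v) < value s (spread v) ↔ r < s :=
  (strictMonoOn_value ⟨0, rfl⟩).lt_iff_lt hr hs

theorem betaK_spec (a b : ℕ) :
    1 < betaK (3 * (2 ^ a * (2 * b + 1))) ∧
      value (betaK (3 * (2 ^ a * (2 * b + 1))))⁻¹ (spread (critSeq a b)) = 1 := by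
  obtain ⟨r, ⟨hr, hr'⟩, hval⟩ := exists_value_spread_eq_one (critSeq a b)
  have h0 : 0 < r := by linarith
  have hset : {β | β ∈ Ioc (1 : ℝ) 2 ∧ ∃ d ∈ Ufat β,
      SmallestPeriod d (3 * (2 ^ a * (2 * b + 1)))} = Ioc r⁻¹ 2 := by
    ext β
    have h1r : 1 < r⁻¹ := (one_lt_inv₀ h0).2 (by linarith)
    have hiff : 1 < β → ((∃ d ∈ Ufat β, SmallestPeriod d (3 * (2 ^ a * (2 * b + 1)))) ↔
        r⁻¹ < β) := fun hβ => by
      rw [exists_mem_Ufat_iff hβ, ← hval, value_spread_lt_value_spread_iff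
        ⟨by positivity, inv_lt_one_of_one_lt₀ hβ⟩ ⟨h0.le, by linarith⟩,
        inv_lt_comm₀ (by linarith) h0]
    exact ⟨fun ⟨⟨hβ, h2⟩, hd⟩ => ⟨(hiff hβ).1 hd, h2⟩,
      fun ⟨hβ, h2⟩ => ⟨⟨h1r.trans hβ, h2⟩, (hiff (h1r.trans hβ)).2 hβ⟩⟩
  have hbeta : betaK (3 * (2 ^ a * (2 * b + 1))) = r⁻¹ := by
    rw [betaK, hset, csInf_Ioc ((inv_lt_comm₀ h0 two_pos).2 (by linarith))]
  rw [hbeta, inv_inv]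
  exact ⟨(one_lt_inv₀ h0).2 (by linarith), hval⟩

lemma value_spread_critSeq_lt {r : ℝ} (h0 : 0 < r) (h1 : r < 1) {a b : ℕ} {v : ℕ → Bool}
    (hv : value r (spread v) ≤ 1) (h : toLex (critSeq a b) < toLex v) :
    value r (spread (critSeq a b)) < value r (spread v) := by
  obtain ⟨e, -, hparry, j, n, -, hmax⟩ := exists_parryLE_spread_critSeq a b
  have hlt := toLex_spread_lt_spread h
  have hdom : ParryLE (visits e j) (spread v) := fun i hi => (hparry j i hi).trans hlt.le
  exact hmax ▸ hdom.value_shift_lt h0 h1 hv (exists_shift_spread_eq_true v) (hmax ▸ hlt)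

theorem betaK_lt_betaK {a b c d : ℕ} (h : toLex (critSeq c d) < toLex (critSeq a b)) :
    betaK (3 * (2 ^ c * (2 * d + 1))) < betaK (3 * (2 ^ a * (2 * b + 1))) := by
  obtain ⟨hs, hvals⟩ := betaK_spec a b
  obtain ⟨ht, hvalt⟩ := betaK_spec c d
  set s := betaK (3 * (2 ^ a * (2 * b + 1)))
  set t := betaK (3 * (2 ^ c * (2 * d + 1)))
  have hs1 : s⁻¹ < 1 := inv_lt_one_of_one_lt₀ hs
  have hlt := value_spread_critSeq_lt (by positivity) hs1 hvals.le h
  rw [hvals, ← hvalt, value_spread_lt_value_spread_iff ⟨by positivity, hs1⟩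
    ⟨by positivity, inv_lt_one_of_one_lt₀ ht⟩] at hlt
  exact (inv_lt_inv₀ (by positivity) (by positivity)).1 hlt

end CriticalBases

lemma betaK_lt_of_sharkovskii {k l : ℕ} (h : Sharkovskii k l) : betaK (3 * l) < betaK (3 * k) := by
  obtain ⟨a, b, c, d, rfl, rfl, -, h⟩ := h
  exact betaK_lt_betaK (toLex_critSeq_lt_critSeq h)

lemma sharkovskii_or_sharkovskii {k l : ℕ} (hk : k ≠ 0) (hl : l ≠ 0) (hkl : k ≠ l) :
    Sharkovskii k l ∨ Sharkovskii l k := by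
  obtain ⟨a, _, ⟨b, rfl⟩, rfl⟩ := Nat.exists_eq_two_pow_mul_odd hk
  obtain ⟨c, _, ⟨d, rfl⟩, rfl⟩ := Nat.exists_eq_two_pow_mul_odd hl
  have hne : ¬(a = c ∧ b = d) := fun ⟨hac, hbd⟩ => hkl (by rw [hac, hbd])
  refine Or.imp (fun h => ⟨a, b, c, d, rfl, rfl, hkl, h⟩)
    (fun h => ⟨c, d, a, b, rfl, rfl, hkl.symm, h⟩) ?_
  omega

/-- β_{3k} > β_{3ℓ} if and only if k ⊳ ℓ in the Sharkovskii ordering. -/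
theorem stmt3 (k l : ℕ) (hk : 1 ≤ k) (hl : 1 ≤ l) :
    FatSierpinski.betaK (3 * l) < FatSierpinski.betaK (3 * k) ↔
      FatSierpinski.Sharkovskii k l := by
  refine ⟨fun hlt => ?_, betaK_lt_of_sharkovskii⟩
  have hkl : k ≠ l := fun h => hlt.ne (by rw [h])
  rcases sharkovskii_or_sharkovskii (Nat.one_le_iff_ne_zero.1 hk) (Nat.one_le_iff_ne_zero.1 hl) hkl
    with h | h
  · exact h
  · exact absurd (betaK_lt_of_sharkovskii h) hlt.not_gt

end FatSierpinski
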